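/- arXiv:1304.5932 — 3 statements merged into one kernel-verified Lean document; each statement's English description precedes it below -/
import Mathlib

section
/- Let τ be the unique positive real with τ·Ω''(τ) = 1, Λ := Ψ(τ), γ := 1 + τ²·Ω'''(τ), ρ := τ·e^{−Ω'(τ)}. Let T(z) be the solution of T = z·e^{Ω'(T)} with T(0) = 0, analytic on [0, ρ), with T(z) → τ as z → ρ⁻, and set U := T + Ω(T) − T·Ω'(T). Then, as z → ρ from the left along the reals: (τ − T(z))/√(1 − z/ρ) → τ·√(2/γ); (1 − T(z)·Ω''(T(z)))^{−1/2}·(1 − z/ρ)^{1/4} → (2γ)^{−1/4}; and (U(z) − τ(1 − Λ) + τ·(1 − z/ρ))/(1 − z/ρ)^{3/2} → (2τ/3)·√(2/γ). -/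
open Filter

/-- `Ω(z) = ∑_{t≥2} ω_t z^t / t!`. -/
noncomputable def Om (ω : ℕ → ℝ) (z : ℝ) : ℝ := ∑' t : ℕ, ω t * z ^ t / t.factorial

/-- `Ψ(z) = Ω'(z) − Ω(z)/z`. -/
noncomputable def Psi (ω : ℕ → ℝ) (z : ℝ) : ℝ := deriv (Om ω) z - Om ω z / z

/-!
`T` is a right inverse of `φ(t) = t e^{-Ω'(t)}`, whose derivative `(1 - t Ω''(t)) e^{-Ω'(t)}` has a
simple zero at `τ` because `(1 - t Ω''(t)) / (τ - t) → γ / τ`. Integrating this once,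
`1 - φ(t) / ρ ~ γ / (2 τ²) (τ - t)²`. The function `u(t) = t + Ω(t) - t Ω'(t)`, for which
`U = u ∘ T`, has derivative `1 - t Ω''(t)`, so `u(t) - u(τ) + τ (1 - φ(t) / ρ)` has derivative
`(1 - t Ω''(t)) (1 - e^{Ω'(τ) - Ω'(t)})`. This has a double zero at `τ`, and integrating gives the
cubic term. Substituting `t = T(z)` turns powers of `τ - t` into powers of `√(1 - z / ρ)`. The
substitution is legitimate because `T` reaches the value `τ` only at `φ(τ) = ρ`, and hence stays
below `τ` on `[0, ρ)`.
-/

open scoped Topology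

section OneSidedAsymptotics

variable {f f' : ℝ → ℝ} {a c L : ℝ}

lemma tendsto_div_sub_nhdsLT_of_hasDerivAt (hf : HasDerivAt f c a) (hfa : f a = 0) :
    Tendsto (fun x => f x / (a - x)) (𝓝[<] a) (𝓝 (-c)) := by
  refine (hasDerivAt_iff_tendsto_slope_left_right.1 hf).1.neg.congr fun x => ?_
  rw [slope_def_field, hfa, sub_zero, ← div_neg, neg_sub]

lemma tendsto_div_pow_succ_nhdsLT {n : ℕ} (hf : ∀ᶠ x in 𝓝[<] a, HasDerivAt f (f' x) x)
    (hfa : Tendsto f (𝓝[<] a) (𝓝 0))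
    (hf' : Tendsto (fun x => f' x / (a - x) ^ n) (𝓝[<] a) (𝓝 L)) :
    Tendsto (fun x => f x / (a - x) ^ (n + 1)) (𝓝[<] a) (𝓝 (-L / (n + 1))) := by
  have hpow_deriv : ∀ x, HasDerivAt (fun x => (a - x) ^ (n + 1)) (-(n + 1) * (a - x) ^ n) x :=
    fun x => (((hasDerivAt_id' x).const_sub a).fun_pow (n + 1)).congr_deriv (by push_cast; ring_nf)
  have hpow_tendsto : Tendsto (fun x => (a - x) ^ (n + 1)) (𝓝[<] a) (𝓝 0) := by
    simpa using (hpow_deriv a).continuousAt.tendsto.mono_left nhdsWithin_le_nhds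
  have hn : (n + 1 : ℝ) ≠ 0 := by positivity
  refine HasDerivAt.lhopital_zero_nhdsLT hf (.of_forall hpow_deriv) ?_ hfa hpow_tendsto ?_
  · filter_upwards [eventually_mem_nhdsWithin] with x hx
    exact mul_ne_zero (neg_ne_zero.2 hn) (pow_ne_zero n (sub_pos.2 hx).ne')
  · rw [neg_div, ← div_neg]
    refine (hf'.div_const (-(n + 1))).congr fun x => ?_
    rw [div_div, mul_comm]

end OneSidedAsymptotics

section SquareRootScale

variable {α : Type*} {l : Filter α} {d q s N : α → ℝ} {a b : ℝ}

lemma tendsto_div_sqrt_of_tendsto_div_sq (hd : ∀ᶠ z in l, 0 ≤ d z) (ha : a ≠ 0)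
    (h : Tendsto (fun z => s z / d z ^ 2) l (𝓝 a)) :
    Tendsto (fun z => d z / √(s z)) l (𝓝 √a⁻¹) := by
  refine (h.inv₀ ha).sqrt.congr' ?_
  filter_upwards [hd] with z hz
  rw [inv_div, Real.sqrt_div (sq_nonneg _), Real.sqrt_sq hz]

-- Where `s ≤ 0` the junk value `q / √s = 0` is bounded away from `b`.
lemma eventually_pos_of_tendsto_div_sqrt (hb : 0 < b)
    (h : Tendsto (fun z => q z / √(s z)) l (𝓝 b)) : ∀ᶠ z in l, 0 < q z ∧ 0 < s z := by
  filter_upwards [h.eventually_const_lt hb] with z hz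
  have hs : 0 < s z := by
    by_contra! hs
    simp [Real.sqrt_eq_zero_of_nonpos hs] at hz
  exact ⟨(div_pos_iff_of_pos_right (Real.sqrt_pos.2 hs)).1 hz, hs⟩

lemma tendsto_div_sqrt_of_tendsto_div (hb : 0 < b)
    (hd : Tendsto (fun z => d z / √(s z)) l (𝓝 b)) (hq : Tendsto (fun z => q z / d z) l (𝓝 a)) :
    Tendsto (fun z => q z / √(s z)) l (𝓝 (a * b)) := by
  refine (hq.mul hd).congr' ?_
  filter_upwards [eventually_pos_of_tendsto_div_sqrt hb hd] with z ⟨hdz, _⟩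
  exact div_mul_div_cancel₀ hdz.ne'

lemma tendsto_rpow_neg_half_mul_rpow_quarter (hb : 0 < b)
    (h : Tendsto (fun z => q z / √(s z)) l (𝓝 b)) :
    Tendsto (fun z => q z ^ (-(1 : ℝ) / 2) * s z ^ ((1 : ℝ) / 4)) l (𝓝 (b ^ (-(1 : ℝ) / 2))) := by
  refine (h.rpow_const (Or.inl hb.ne')).congr' ?_
  filter_upwards [eventually_pos_of_tendsto_div_sqrt hb h] with z ⟨hq, hs⟩
  rw [Real.div_rpow hq.le (Real.sqrt_nonneg _), div_eq_mul_inv,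
    ← Real.rpow_neg (Real.sqrt_nonneg _), ← Real.rpow_div_two_eq_sqrt _ hs.le]
  norm_num

lemma tendsto_div_rpow_three_halves (hb : 0 < b)
    (hd : Tendsto (fun z => d z / √(s z)) l (𝓝 b))
    (hN : Tendsto (fun z => N z / d z ^ 3) l (𝓝 a)) :
    Tendsto (fun z => N z / s z ^ ((3 : ℝ) / 2)) l (𝓝 (a * b ^ 3)) := by
  refine (hN.mul (hd.pow 3)).congr' ?_
  filter_upwards [eventually_pos_of_tendsto_div_sqrt hb hd] with z ⟨hdz, hs⟩
  rw [Real.rpow_div_two_eq_sqrt _ hs.le, div_pow,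
    div_mul_div_cancel₀ (pow_ne_zero 3 hdz.ne')]
  norm_cast

end SquareRootScale

section ExponentialGeneratingFunction

variable {ω : ℕ → ℝ} {C : ℝ}

lemma abs_mul_pow_div_factorial_le {c z R : ℝ} (hc : |c| ≤ C) (hz : |z| ≤ R) (t : ℕ) :
    |c * z ^ t / t.factorial| ≤ C * (R ^ t / t.factorial) := by
  have hC0 : 0 ≤ C := (abs_nonneg c).trans hc
  rw [mul_div_assoc, abs_mul, abs_div, abs_pow, Nat.abs_cast]
  gcongr

lemma summable_mul_pow_div_factorial (hC : ∀ t, |ω t| ≤ C) (z : ℝ) :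
    Summable fun t : ℕ => ω t * z ^ t / t.factorial :=
  .of_norm_bounded ((Real.summable_pow_div_factorial |z|).mul_left C)
    fun t => abs_mul_pow_div_factorial_le (hC t) le_rfl t

lemma hasDerivAt_mul_pow_succ_div_factorial (c y : ℝ) (t : ℕ) :
    HasDerivAt (fun y => c * y ^ (t + 1) / (t + 1).factorial) (c * y ^ t / t.factorial) y := by
  refine (((hasDerivAt_pow (t + 1) y).const_mul c).div_const _).congr_deriv ?_
  rw [Nat.factorial_succ, Nat.add_sub_cancel]
  push_cast
  field_simp

lemma hasDerivAt_om (hC : ∀ t, |ω t| ≤ C) (z : ℝ) :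
    HasDerivAt (Om ω) (Om (fun t => ω (t + 1)) z) z := by
  have split_zero : Om ω =
      fun z => ω 0 + ∑' t : ℕ, ω (t + 1) * z ^ (t + 1) / (t + 1).factorial := by
    funext z
    simp [Om, (summable_mul_pow_div_factorial hC z).tsum_eq_zero_add]
  rw [split_zero]
  refine HasDerivAt.const_add _ (hasDerivAt_tsum_of_isPreconnected
    ((Real.summable_pow_div_factorial (|z| + 1)).mul_left C) Metric.isOpen_ball
    (convex_ball (0 : ℝ) (|z| + 1)).isPreconnected
    (fun t y _ => hasDerivAt_mul_pow_succ_div_factorial (ω (t + 1)) y t)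
    (fun t y hy => abs_mul_pow_div_factorial_le (hC (t + 1)) ?_ t) (y₀ := z) ?_
    ((summable_nat_add_iff 1).2 (summable_mul_pow_div_factorial hC z)) ?_)
  · exact (mem_ball_zero_iff.1 hy).le
  all_goals simp

lemma iteratedDeriv_om (hC : ∀ t, |ω t| ≤ C) (n : ℕ) :
    iteratedDeriv n (Om ω) = Om fun t => ω (t + n) := by
  induction n with
  | zero => simp
  | succ n ih =>
    funext z
    rw [iteratedDeriv_succ, ih, (hasDerivAt_om (fun t => hC (t + n)) z).deriv]
    simp only [add_assoc, add_comm 1 n]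

lemma contDiff_om (hC : ∀ t, |ω t| ≤ C) (n : ℕ∞) : ContDiff ℝ n (Om ω) :=
  contDiff_of_differentiable_iteratedDeriv fun m _ => iteratedDeriv_om hC m ▸
    fun z => (hasDerivAt_om (fun t => hC (t + m)) z).differentiableAt

lemma iteratedDeriv_om_nonneg (hC : ∀ t, |ω t| ≤ C) (hω : ∀ t, 0 ≤ ω t) (n : ℕ) {z : ℝ}
    (hz : 0 ≤ z) : 0 ≤ iteratedDeriv n (Om ω) z := by
  rw [iteratedDeriv_om hC]
  exact tsum_nonneg fun t =>
    div_nonneg (mul_nonneg (hω (t + n)) (pow_nonneg hz t)) (Nat.cast_nonneg _)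

end ExponentialGeneratingFunction

section CriticalPoint

/-- The function `t ↦ t e^{-F'(t)}`, which undoes any solution `T` of `T = z e^{F'(T)}`. -/
noncomputable def treeInv (F : ℝ → ℝ) (t : ℝ) : ℝ := t * Real.exp (-deriv F t)

/-- The unrooted series `U = T + F(T) - T F'(T)` as a function of the value `t` of the rooted
series `T`. -/
noncomputable def unrooted (F : ℝ → ℝ) (t : ℝ) : ℝ := t + F t - t * deriv F t

variable {F : ℝ → ℝ} {t z τ γ : ℝ}

lemma treeInv_eq_of_eq_mul_exp (h : t = z * Real.exp (deriv F t)) : treeInv F t = z := by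
  rw [treeInv, Real.exp_neg, ← div_eq_mul_inv, div_eq_iff (Real.exp_ne_zero _), ← h]

lemma hasDerivAt_one_sub_treeInv_div (h : DifferentiableAt ℝ (deriv F) t) :
    HasDerivAt (fun t => 1 - treeInv F t / treeInv F τ)
      (-((1 - t * deriv (deriv F) t) * Real.exp (deriv F τ - deriv F t) / τ)) t := by
  refine ((((hasDerivAt_id' t).mul h.hasDerivAt.neg.exp).div_const _).const_sub 1).congr_deriv ?_
  simp only [treeInv, Pi.neg_apply, sub_eq_add_neg, Real.exp_add, Real.exp_neg]
  field_simp

lemma hasDerivAt_unrooted (h : DifferentiableAt ℝ F t) (h' : DifferentiableAt ℝ (deriv F) t) :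
    HasDerivAt (unrooted F) (1 - t * deriv (deriv F) t) t :=
  (((hasDerivAt_id' t).add h.hasDerivAt).sub ((hasDerivAt_id' t).mul h'.hasDerivAt)).congr_deriv
    (by ring)

lemma eventually_differentiableAt_and_deriv (hF : ContDiffAt ℝ 2 F τ) :
    ∀ᶠ t in 𝓝 τ, DifferentiableAt ℝ F t ∧ DifferentiableAt ℝ (deriv F) t := by
  filter_upwards [hF.eventually (by simp)] with t ht
  exact ⟨ht.differentiableAt two_ne_zero,
    (ht.derivWithin (m := 1) (by norm_num)).differentiableAt one_ne_zero⟩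

lemma tendsto_one_sub_mul_deriv_deriv_div (hF : ContDiffAt ℝ 3 F τ)
    (hτ : τ * deriv (deriv F) τ = 1) (hγ : γ = 1 + τ ^ 2 * iteratedDeriv 3 F τ) :
    Tendsto (fun t => (1 - t * deriv (deriv F) t) / (τ - t)) (𝓝[<] τ) (𝓝 (γ / τ)) := by
  have hF'' : HasDerivAt (deriv (deriv F)) (iteratedDeriv 3 F τ) τ := by
    have hF1 : ContDiffAt ℝ 2 (deriv F) τ := hF.derivWithin (by norm_num)
    have hF2 : ContDiffAt ℝ 1 (deriv (deriv F)) τ := hF1.derivWithin (by norm_num)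
    simpa only [iteratedDeriv_succ, iteratedDeriv_zero]
      using (hF2.differentiableAt one_ne_zero).hasDerivAt
  have hτ0 : τ ≠ 0 := left_ne_zero_of_mul_eq_one hτ
  rw [← neg_neg (γ / τ)]
  refine tendsto_div_sub_nhdsLT_of_hasDerivAt
    ((((hasDerivAt_id' τ).fun_mul hF'').const_sub 1).congr_deriv ?_) (sub_eq_zero.2 hτ.symm)
  rw [hγ, eq_one_div_of_mul_eq_one_right hτ]
  field_simp

lemma tendsto_one_sub_treeInv_div_sq (hF : ContDiffAt ℝ 3 F τ)
    (hτ : τ * deriv (deriv F) τ = 1) (hγ : γ = 1 + τ ^ 2 * iteratedDeriv 3 F τ) :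
    Tendsto (fun t => (1 - treeInv F t / treeInv F τ) / (τ - t) ^ 2) (𝓝[<] τ)
      (𝓝 (γ / (2 * τ ^ 2))) := by
  have hτ0 : τ ≠ 0 := left_ne_zero_of_mul_eq_one hτ
  have hdiff := eventually_differentiableAt_and_deriv (hF.of_le (by norm_num))
  have hF' : DifferentiableAt ℝ (deriv F) τ := hdiff.self_of_nhds.2
  have hexp : Tendsto (fun t => Real.exp (deriv F τ - deriv F t)) (𝓝[<] τ) (𝓝 1) := by
    simpa using (hF'.hasDerivAt.const_sub (deriv F τ)).exp.continuousAt.tendsto.mono_left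
      nhdsWithin_le_nhds
  have hzero : Tendsto (fun t => 1 - treeInv F t / treeInv F τ) (𝓝[<] τ) (𝓝 0) := by
    have hcont := (hasDerivAt_one_sub_treeInv_div (τ := τ) hF').continuousAt
    simpa [treeInv, hτ0] using hcont.tendsto.mono_left nhdsWithin_le_nhds
  have hderiv : Tendsto (fun t => -((1 - t * deriv (deriv F) t) *
      Real.exp (deriv F τ - deriv F t) / τ) / (τ - t) ^ 1) (𝓝[<] τ) (𝓝 (-(γ / τ * 1 / τ))) := by
    refine (((tendsto_one_sub_mul_deriv_deriv_div hF hτ hγ).mul hexp).div_const τ).neg.congr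
      fun t => ?_
    ring
  convert tendsto_div_pow_succ_nhdsLT ((hdiff.filter_mono nhdsWithin_le_nhds).mono fun t ht =>
    hasDerivAt_one_sub_treeInv_div ht.2) hzero hderiv using 2
  push_cast
  field_simp
  norm_num

lemma tendsto_unrooted_sub_add_div_cube (hF : ContDiffAt ℝ 3 F τ)
    (hτ : τ * deriv (deriv F) τ = 1) (hγ : γ = 1 + τ ^ 2 * iteratedDeriv 3 F τ) :
    Tendsto (fun t => (unrooted F t - unrooted F τ + τ * (1 - treeInv F t / treeInv F τ)) /
      (τ - t) ^ 3) (𝓝[<] τ) (𝓝 (γ / (3 * τ ^ 2))) := by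
  have hτ0 : τ ≠ 0 := left_ne_zero_of_mul_eq_one hτ
  have hdiff := eventually_differentiableAt_and_deriv (hF.of_le (by norm_num))
  have hsum_deriv : ∀ᶠ t in 𝓝 τ, HasDerivAt
      (fun t => unrooted F t - unrooted F τ + τ * (1 - treeInv F t / treeInv F τ))
      ((1 - t * deriv (deriv F) t) * (1 - Real.exp (deriv F τ - deriv F t))) t := by
    filter_upwards [hdiff] with t ⟨ht, ht'⟩
    refine (((hasDerivAt_unrooted ht ht').sub_const _).add
      ((hasDerivAt_one_sub_treeInv_div ht').const_mul τ)).congr_deriv ?_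
    field_simp
    ring
  have hzero : Tendsto
      (fun t => unrooted F t - unrooted F τ + τ * (1 - treeInv F t / treeInv F τ))
      (𝓝[<] τ) (𝓝 0) := by
    simpa [treeInv, hτ0] using
      hsum_deriv.self_of_nhds.continuousAt.tendsto.mono_left nhdsWithin_le_nhds
  have hexp : Tendsto (fun t => (1 - Real.exp (deriv F τ - deriv F t)) / (τ - t)) (𝓝[<] τ)
      (𝓝 (-deriv (deriv F) τ)) := by
    refine tendsto_div_sub_nhdsLT_of_hasDerivAt
      (((hdiff.self_of_nhds.2.hasDerivAt.const_sub _).exp.const_sub 1).congr_deriv ?_) (by simp)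
    simp
  have hderiv : Tendsto (fun t => (1 - t * deriv (deriv F) t) *
      (1 - Real.exp (deriv F τ - deriv F t)) / (τ - t) ^ 2) (𝓝[<] τ)
      (𝓝 (γ / τ * -deriv (deriv F) τ)) := by
    refine ((tendsto_one_sub_mul_deriv_deriv_div hF hτ hγ).mul hexp).congr fun t => ?_
    rw [div_mul_div_comm, sq]
  convert tendsto_div_pow_succ_nhdsLT (hsum_deriv.filter_mono nhdsWithin_le_nhds) hzero hderiv
    using 2
  rw [eq_one_div_of_mul_eq_one_right hτ]
  push_cast
  field_simp
  norm_num

end CriticalPoint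

lemma forall_lt_of_isPreconnected_of_forall_ne {X α : Type*} [TopologicalSpace X] [LinearOrder α]
    [TopologicalSpace α] [OrderClosedTopology α] {s : Set X} {f : X → α} {x₀ : X} {c : α}
    (hs : IsPreconnected s) (hf : ContinuousOn f s) (hx₀ : x₀ ∈ s) (hfx₀ : f x₀ < c)
    (hne : ∀ x ∈ s, f x ≠ c) : ∀ x ∈ s, f x < c := by
  intro x hx
  by_contra! hcx
  obtain ⟨w, hw, hfw⟩ := hs.intermediate_value hx₀ hx hf ⟨hfx₀.le, hcx⟩
  exact hne w hw hfw

lemma tendsto_nhdsLT_of_treeInv_eq {F T : ℝ → ℝ} {τ ρ : ℝ} (hτpos : 0 < τ)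
    (hρ : ρ = treeInv F τ) (hTcont : ContinuousOn T (Set.Ico 0 ρ)) (hT0 : T 0 = 0)
    (hTinv : ∀ z ∈ Set.Ico 0 ρ, treeInv F (T z) = z) (hTlim : Tendsto T (𝓝[<] ρ) (𝓝 τ)) :
    Tendsto T (𝓝[<] ρ) (𝓝[<] τ) := by
  have hρpos : 0 < ρ := hρ ▸ mul_pos hτpos (Real.exp_pos _)
  have hTne : ∀ z ∈ Set.Ico 0 ρ, T z ≠ τ := fun z hz hTz =>
    hz.2.ne (by rw [← hTinv z hz, hTz, hρ])
  have hTlt : ∀ z ∈ Set.Ico 0 ρ, T z < τ := forall_lt_of_isPreconnected_of_forall_ne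
    isPreconnected_Ico hTcont (Set.left_mem_Ico.2 hρpos) (by rwa [hT0]) hTne
  refine tendsto_nhdsWithin_iff.2 ⟨hTlim, ?_⟩
  filter_upwards [Ico_mem_nhdsLT hρpos] with z hz using hTlt z hz

section Constants

variable {τ γ : ℝ}

lemma sqrt_inv_div_two_mul_sq (hτ : 0 ≤ τ) : √(γ / (2 * τ ^ 2))⁻¹ = τ * √(2 / γ) := by
  rw [inv_div, mul_comm, mul_div_assoc, Real.sqrt_mul (sq_nonneg τ), Real.sqrt_sq hτ]

lemma div_mul_mul_sqrt_two_div_rpow (hτ : τ ≠ 0) (hγ : 0 ≤ γ) :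
    (γ / τ * (τ * √(2 / γ))) ^ (-(1 : ℝ) / 2) = (2 * γ) ^ (-(1 : ℝ) / 4) := by
  have hsq : γ ^ 2 * (2 / γ) = 2 * γ := by field_simp
  have hsqrt : γ / τ * (τ * √(2 / γ)) = √(2 * γ) := by
    rw [← mul_assoc, div_mul_cancel₀ _ hτ, ← hsq, Real.sqrt_mul (sq_nonneg γ), Real.sqrt_sq hγ]
  rw [hsqrt, ← Real.rpow_div_two_eq_sqrt _ (by positivity)]
  norm_num

lemma div_three_mul_sq_mul_cube_sqrt (hτ : τ ≠ 0) (hγ : 0 < γ) :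
    γ / (3 * τ ^ 2) * (τ * √(2 / γ)) ^ 3 = 2 * τ / 3 * √(2 / γ) := by
  have hsq : √(2 / γ) ^ 2 = 2 / γ := Real.sq_sqrt (by positivity)
  rw [mul_pow, pow_succ √(2 / γ), hsq]
  field_simp

end Constants

theorem stmt11_general {F : ℝ → ℝ} {τ Λ γ ρ : ℝ} (hF : ContDiffAt ℝ 3 F τ) (hτpos : 0 < τ)
    (hτ : τ * deriv (deriv F) τ = 1) (hΛ : Λ = deriv F τ - F τ / τ)
    (hγ : γ = 1 + τ ^ 2 * iteratedDeriv 3 F τ) (hγpos : 0 < γ)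
    (hρ : ρ = τ * Real.exp (-deriv F τ))
    {T : ℝ → ℝ} (hTcont : ContinuousOn T (Set.Ico 0 ρ))
    (hTeq : ∀ z ∈ Set.Ico 0 ρ, T z = z * Real.exp (deriv F (T z)))
    (hTlim : Tendsto T (𝓝[<] ρ) (𝓝 τ))
    {U : ℝ → ℝ} (hU : ∀ z, U z = T z + F (T z) - T z * deriv F (T z)) :
    Tendsto (fun z => (τ - T z) / √(1 - z / ρ)) (𝓝[<] ρ) (𝓝 (τ * √(2 / γ))) ∧
    Tendsto (fun z => (1 - T z * deriv (deriv F) (T z)) ^ (-(1 : ℝ) / 2) *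
      (1 - z / ρ) ^ ((1 : ℝ) / 4)) (𝓝[<] ρ) (𝓝 ((2 * γ) ^ (-(1 : ℝ) / 4))) ∧
    Tendsto (fun z => (U z - τ * (1 - Λ) + τ * (1 - z / ρ)) / (1 - z / ρ) ^ ((3 : ℝ) / 2))
      (𝓝[<] ρ) (𝓝 (2 * τ / 3 * √(2 / γ))) := by
  have hρpos : 0 < ρ := by rw [hρ]; positivity
  have hTinv : ∀ z ∈ Set.Ico 0 ρ, treeInv F (T z) = z := fun z hz =>
    treeInv_eq_of_eq_mul_exp (hTeq z hz)
  have hT0 : T 0 = 0 := by simpa using hTeq 0 (Set.left_mem_Ico.2 hρpos)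
  have hT := tendsto_nhdsLT_of_treeInv_eq hτpos hρ hTcont hT0 hTinv hTlim
  have hTle : ∀ᶠ z in 𝓝[<] ρ, 0 ≤ τ - T z :=
    (hT.eventually eventually_mem_nhdsWithin).mono fun z hz => (sub_pos.2 hz).le
  have hUτ : τ * (1 - Λ) = unrooted F τ := by rw [hΛ, unrooted]; field_simp; ring
  have hsq : Tendsto (fun z => (1 - z / ρ) / (τ - T z) ^ 2) (𝓝[<] ρ) (𝓝 (γ / (2 * τ ^ 2))) := by
    refine ((tendsto_one_sub_treeInv_div_sq hF hτ hγ).comp hT).congr' ?_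
    filter_upwards [Ico_mem_nhdsLT hρpos] with z hz
    rw [Function.comp_apply, hTinv z hz, hρ, treeInv]
  have hcube : Tendsto (fun z => (U z - τ * (1 - Λ) + τ * (1 - z / ρ)) / (τ - T z) ^ 3)
      (𝓝[<] ρ) (𝓝 (γ / (3 * τ ^ 2))) := by
    refine ((tendsto_unrooted_sub_add_div_cube hF hτ hγ).comp hT).congr' ?_
    filter_upwards [Ico_mem_nhdsLT hρpos] with z hz
    rw [Function.comp_apply, hTinv z hz, hUτ, hU z, hρ, treeInv, unrooted]
  have hsqrt := tendsto_div_sqrt_of_tendsto_div_sq hTle (by positivity) hsq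
  rw [sqrt_inv_div_two_mul_sq hτpos.le] at hsqrt
  refine ⟨hsqrt, ?_, ?_⟩
  · rw [← div_mul_mul_sqrt_two_div_rpow hτpos.ne' hγpos.le]
    exact tendsto_rpow_neg_half_mul_rpow_quarter (by positivity) <|
      tendsto_div_sqrt_of_tendsto_div (by positivity) hsqrt <|
        (tendsto_one_sub_mul_deriv_deriv_div hF hτ hγ).comp hT
  · rw [← div_three_mul_sq_mul_cube_sqrt hτpos.ne' hγpos]
    exact tendsto_div_rpow_three_halves (by positivity) hsqrt hcube

theorem stmt11 (ω : ℕ → ℝ)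
    (hnonneg : ∀ t, 0 ≤ ω t) (hbdd : ∃ C, ∀ t, ω t ≤ C)
    (h0 : ω 0 = 0) (h1 : ω 1 = 0) (hnz : ∃ t, ω t ≠ 0)
    (τ : ℝ) (hτpos : 0 < τ) (hτ : τ * deriv (deriv (Om ω)) τ = 1)
    (Λ γ ρ : ℝ) (hΛ : Λ = Psi ω τ)
    (hγ : γ = 1 + τ ^ 2 * iteratedDeriv 3 (Om ω) τ)
    (hρ : ρ = τ * Real.exp (-deriv (Om ω) τ))
    (T : ℝ → ℝ) (hT0 : T 0 = 0)
    (hTanal : AnalyticOnNhd ℝ T (Set.Ico 0 ρ))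
    (hTeq : ∀ z ∈ Set.Ico 0 ρ, T z = z * Real.exp (deriv (Om ω) (T z)))
    (hTlim : Tendsto T (nhdsWithin ρ (Set.Iio ρ)) (nhds τ))
    (U : ℝ → ℝ)
    (hU : ∀ z, U z = T z + Om ω (T z) - T z * deriv (Om ω) (T z)) :
    Tendsto (fun z => (τ - T z) / Real.sqrt (1 - z / ρ))
      (nhdsWithin ρ (Set.Iio ρ)) (nhds (τ * Real.sqrt (2 / γ))) ∧
    Tendsto (fun z =>
        (1 - T z * deriv (deriv (Om ω)) (T z)) ^ (-(1 : ℝ) / 2) *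
          (1 - z / ρ) ^ ((1 : ℝ) / 4))
      (nhdsWithin ρ (Set.Iio ρ)) (nhds ((2 * γ) ^ (-(1 : ℝ) / 4))) ∧
    Tendsto (fun z =>
        (U z - τ * (1 - Λ) + τ * (1 - z / ρ)) / (1 - z / ρ) ^ ((3 : ℝ) / 2))
      (nhdsWithin ρ (Set.Iio ρ)) (nhds (2 * τ / 3 * Real.sqrt (2 / γ))) := by
  obtain ⟨C, hC⟩ := hbdd
  have hωC : ∀ t, |ω t| ≤ C := fun t => (abs_of_nonneg (hnonneg t)).trans_le (hC t)
  have hγpos : 0 < γ :=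
    hγ ▸ add_pos_of_pos_of_nonneg one_pos
      (mul_nonneg (sq_nonneg τ) (iteratedDeriv_om_nonneg hωC hnonneg 3 hτpos.le))
  exact stmt11_general (contDiff_om hωC 3).contDiffAt hτpos hτ hΛ hγ hγpos hρ
    hTanal.continuousOn hTeq hTlim hU
end

section
/- With e_r := (6r)!/( (3!)^{2r} · 2^{3r} · (3r)! · (2r)! ), the series ∑_{r≥0} 3^{−r} · e_r · 4^r · r!/(2r)! converges and its sum equals √(3/2). Equivalently, the Gauss hypergeometric value ₂F₁(1/6, 5/6; 1/2; 1/2) equals √(3/2). -/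
/-- `e_r = (6r)! / ((3!)^{2r} · 2^{3r} · (3r)! · (2r)!)`, the number of cubic
multigraphs of excess `r` divided by `(2r)!`. -/
noncomputable def cubicE (r : ℕ) : ℝ :=
  ((6 * r).factorial : ℝ) /
    (((3).factorial : ℝ) ^ (2 * r) * 2 ^ (3 * r) *
      ((3 * r).factorial : ℝ) * ((2 * r).factorial : ℝ))

/-!
The identity is the case `ω = 2/3`, `t = π/4` of the evaluation
`₂F₁((1 - ω)/2, (1 + ω)/2; 1/2; sin² t) = cos (ω t) / cos t`. Substituting `z = sin² t` in the
hypergeometric equation turns it into the equation `u'' = -ω² u` of a harmonic oscillator for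
`u t = ₂F₁(…; sin² t) cos t`, and the initial values `u 0 = 1`, `u' 0 = 0` select
`u t = cos (ω t)`. The cubic multigraph series is the same series term by term, because
`(6r)! r! / ((3r)! (2r)!) = 432^r (1/6)_r (5/6)_r` and `(2r)! = 4^r r! (1/2)_r`.
-/

section PowerSeries

open FormalMultilinearSeries

variable {𝕜 : Type*} [NontriviallyNormedField 𝕜] {f : 𝕜 → 𝕜} {c : ℕ → 𝕜}

theorem hasSum_mul_pow_of_hasFPowerSeriesOnBall {r : ENNReal} {y : 𝕜}
    (h : HasFPowerSeriesOnBall f (ofScalars 𝕜 c) 0 r) (hy : y ∈ Metric.eball 0 r) :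
    HasSum (fun n => c n * y ^ n) (f y) := by
  simpa only [ofScalars_apply_eq, smul_eq_mul, zero_add] using h.hasSum hy

theorem hasFPowerSeriesOnBall_deriv_ofScalars [CompleteSpace 𝕜] {x : 𝕜} {r : ENNReal}
    (h : HasFPowerSeriesOnBall f (ofScalars 𝕜 c) x r) :
    HasFPowerSeriesOnBall (deriv f) (ofScalars 𝕜 fun n => (n + 1) * c (n + 1)) x r := by
  let ev : (𝕜 →L[𝕜] 𝕜) →L[𝕜] 𝕜 := ContinuousLinearMap.apply 𝕜 𝕜 1
  have hseries : ev.compFormalMultilinearSeries (ofScalars 𝕜 c).derivSeries =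
      ofScalars 𝕜 fun n => (n + 1) * c (n + 1) := by
    ext n
    simp [ev]
  exact hseries ▸ ev.comp_hasFPowerSeriesOnBall h.fderiv

theorem hasSum_mul_pow_of_hasSum_succ {R : Type*} [CommRing R] [TopologicalSpace R]
    [IsTopologicalRing R] {c : ℕ → R} {z S : R} (h0 : c 0 = 0)
    (h : HasSum (fun n => c (n + 1) * z ^ n) S) : HasSum (fun n => c n * z ^ n) (z * S) := by
  rw [← hasSum_nat_add_iff' 1]
  simpa [h0, pow_succ', mul_left_comm] using h.mul_left z

end PowerSeries

theorem mem_eball_zero_one_iff {E : Type*} [SeminormedAddGroup E] {x : E} :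
    x ∈ Metric.eball (0 : E) 1 ↔ ‖x‖ < 1 := by
  rw [mem_eball_zero_iff, ← ofReal_norm, ENNReal.ofReal_lt_one]

theorem ordinaryHypergeometricCoefficient_succ {K : Type*} [Field K] [CharZero K] {a b c : K}
    {n : ℕ} (hc : c ≠ -n) :
    (n + 1) * (n + c) * ordinaryHypergeometricCoefficient a b c (n + 1) =
      (n + a) * (n + b) * ordinaryHypergeometricCoefficient a b c n := by
  have hn : (n + 1 : K) ≠ 0 := n.cast_add_one_ne_zero
  have hcn : c + n ≠ 0 := fun h => hc (eq_neg_of_add_eq_zero_left h)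
  simp only [ordinaryHypergeometricCoefficient, ascPochhammer_succ_eval, Nat.factorial_succ,
    Nat.cast_mul, Nat.cast_succ, mul_inv]
  field_simp
  ring

section Hypergeometric

open FormalMultilinearSeries

variable {𝕜 : Type*} [RCLike 𝕜] (a b c : 𝕜)

theorem one_le_radius_ordinaryHypergeometricSeries (𝔸 : Type*) [NormedDivisionRing 𝔸]
    [NormedAlgebra 𝕜 𝔸] : 1 ≤ (ordinaryHypergeometricSeries 𝔸 a b c).radius := by
  by_cases habc : ∀ k : ℕ, (k : 𝕜) ≠ -a ∧ (k : 𝕜) ≠ -b ∧ (k : 𝕜) ≠ -c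
  · exact (ordinaryHypergeometricSeries_radius_eq_one 𝔸 a b c habc).ge
  · obtain ⟨k, hk⟩ : ∃ k : ℕ, a = -(k : 𝕜) ∨ b = -(k : 𝕜) ∨ c = -(k : 𝕜) := by
      by_contra! h
      exact habc fun k => ⟨fun e => (h k).1 (by simp [e]), fun e => (h k).2.1 (by simp [e]),
        fun e => (h k).2.2 (by simp [e])⟩
    rcases hk with rfl | rfl | rfl
    · exact (ordinaryHypergeometric_radius_top_of_neg_nat₁ 𝔸 b c).symm ▸ le_top
    · exact (ordinaryHypergeometric_radius_top_of_neg_nat₂ 𝔸 a c).symm ▸ le_top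
    · exact (ordinaryHypergeometric_radius_top_of_neg_nat₃ 𝔸 a b).symm ▸ le_top

theorem hasFPowerSeriesOnBall_ordinaryHypergeometric :
    HasFPowerSeriesOnBall (₂F₁ a b c : 𝕜 → 𝕜)
      (ofScalars 𝕜 (ordinaryHypergeometricCoefficient a b c)) 0 1 :=
  have h := one_le_radius_ordinaryHypergeometricSeries a b c 𝕜
  (FormalMultilinearSeries.hasFPowerSeriesOnBall _ (zero_lt_one.trans_le h)).mono one_pos h

variable {z : 𝕜}

theorem hasSum_ordinaryHypergeometric (hz : ‖z‖ < 1) :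
    HasSum (fun n => ordinaryHypergeometricCoefficient a b c n * z ^ n) (₂F₁ a b c z) :=
  hasSum_mul_pow_of_hasFPowerSeriesOnBall (hasFPowerSeriesOnBall_ordinaryHypergeometric a b c)
    (mem_eball_zero_one_iff.2 hz)

theorem analyticAt_ordinaryHypergeometric (hz : ‖z‖ < 1) : AnalyticAt 𝕜 (₂F₁ a b c) z :=
  (hasFPowerSeriesOnBall_ordinaryHypergeometric a b c).analyticAt_of_mem
    (mem_eball_zero_one_iff.2 hz)

variable {a b c}

theorem ordinaryHypergeometric_differentialEquation (hc : ∀ n : ℕ, c ≠ -n) (hz : ‖z‖ < 1) :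
    z * (1 - z) * deriv (deriv (₂F₁ a b c)) z + (c - (a + b + 1) * z) * deriv (₂F₁ a b c) z =
      a * b * ₂F₁ a b c z := by
  set A := ordinaryHypergeometricCoefficient a b c
  have hz' : z ∈ Metric.eball 0 1 := mem_eball_zero_one_iff.2 hz
  have hF' := hasFPowerSeriesOnBall_deriv_ofScalars
    (hasFPowerSeriesOnBall_ordinaryHypergeometric a b c)
  have sum_F : HasSum (fun n => A n * z ^ n) (₂F₁ a b c z) := hasSum_ordinaryHypergeometric a b c hz
  have sum_F' := hasSum_mul_pow_of_hasFPowerSeriesOnBall hF' hz'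
  have sum_F'' := hasSum_mul_pow_of_hasFPowerSeriesOnBall
    (hasFPowerSeriesOnBall_deriv_ofScalars hF') hz'
  have sum_zF' : HasSum (fun n : ℕ => n * A n * z ^ n) (z * deriv (₂F₁ a b c) z) :=
    hasSum_mul_pow_of_hasSum_succ (by simp) (by simpa using sum_F')
  have sum_zF'' : HasSum (fun n : ℕ => n * ((n + 1) * A (n + 1)) * z ^ n)
      (z * deriv (deriv (₂F₁ a b c)) z) :=
    hasSum_mul_pow_of_hasSum_succ (by simp) (by simpa using sum_F'')
  have sum_zzF'' : HasSum (fun n : ℕ => (n - 1) * (n * A n) * z ^ n)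
      (z * (z * deriv (deriv (₂F₁ a b c)) z)) :=
    hasSum_mul_pow_of_hasSum_succ (by simp) (by simpa using sum_zF'')
  have sum_lhs := ((sum_zF''.sub sum_zzF'').add (sum_F'.mul_left c)).sub
    (sum_zF'.mul_left (a + b + 1))
  refine Eq.trans (by ring)
    (sum_lhs.unique ((sum_F.mul_left (a * b)).congr_fun fun n => ?_))
  linear_combination z ^ n * ordinaryHypergeometricCoefficient_succ (a := a) (b := b) (hc n)

end Hypergeometric

section Oscillator

variable {E : Type*} [NormedAddCommGroup E] [NormedSpace ℝ E]

theorem eqOn_Ioo_of_second_deriv_eq_smul {u u' w w' : ℝ → E} {κ α β t₀ : ℝ}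
    (ht₀ : t₀ ∈ Set.Ioo α β)
    (hu : ∀ t ∈ Set.Ioo α β, HasDerivAt u (u' t) t)
    (hu' : ∀ t ∈ Set.Ioo α β, HasDerivAt u' (κ • u t) t)
    (hw : ∀ t ∈ Set.Ioo α β, HasDerivAt w (w' t) t)
    (hw' : ∀ t ∈ Set.Ioo α β, HasDerivAt w' (κ • w t) t)
    (h : u t₀ = w t₀) (h' : u' t₀ = w' t₀) : Set.EqOn u w (Set.Ioo α β) := by
  let L : E × E →L[ℝ] E × E :=
    (ContinuousLinearMap.snd ℝ E E).prod (κ • ContinuousLinearMap.fst ℝ E E)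
  have key : Set.EqOn (fun t => (u t, u' t)) (fun t => (w t, w' t)) (Set.Ioo α β) :=
    ODE_solution_unique_of_mem_Ioo (v := fun _ => L) (s := fun _ => Set.univ)
      (fun _ _ => L.lipschitz.lipschitzOnWith) ht₀
      (fun t ht => ⟨(hu t ht).prodMk (hu' t ht), Set.mem_univ _⟩)
      (fun t ht => ⟨(hw t ht).prodMk (hw' t ht), Set.mem_univ _⟩) (Prod.ext h h')
  exact fun t ht => congrArg Prod.fst (key ht)

end Oscillator

section SinSq

open Real Set

theorem hasDerivAt_comp_sin_sq {F : ℝ → ℝ} {F' t : ℝ} (hF : HasDerivAt F F' (sin t ^ 2)) :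
    HasDerivAt (fun s => F (sin s ^ 2)) (F' * (2 * sin t * cos t)) t := by
  have hsin : HasDerivAt (fun s => sin s ^ 2) (2 * sin t * cos t) t := by
    simpa using (hasDerivAt_sin t).fun_pow 2
  exact hF.comp t hsin

theorem hasDerivAt_comp_sin_sq_mul_cos {F : ℝ → ℝ} {F' t : ℝ}
    (hF : HasDerivAt F F' (sin t ^ 2)) :
    HasDerivAt (fun s => F (sin s ^ 2) * cos s)
      (2 * F' * sin t * cos t ^ 2 - F (sin t ^ 2) * sin t) t :=
  ((hasDerivAt_comp_sin_sq hF).mul (hasDerivAt_cos t)).congr_deriv (by ring)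

theorem hasDerivAt_deriv_comp_sin_sq_mul_cos {F F' : ℝ → ℝ} {F'' κ t : ℝ}
    (hF : HasDerivAt F (F' (sin t ^ 2)) (sin t ^ 2)) (hF' : HasDerivAt F' F'' (sin t ^ 2))
    (hode : sin t ^ 2 * (1 - sin t ^ 2) * F'' + (1 / 2 - 2 * sin t ^ 2) * F' (sin t ^ 2) =
      (1 + κ) / 4 * F (sin t ^ 2)) :
    HasDerivAt (fun s => 2 * F' (sin s ^ 2) * sin s * cos s ^ 2 - F (sin s ^ 2) * sin s)
      (κ * (F (sin t ^ 2) * cos t)) t := by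
  have hcos : HasDerivAt (fun s => cos s ^ 2) (2 * cos t * -sin t) t := by
    simpa using (hasDerivAt_cos t).fun_pow 2
  refine (((((hasDerivAt_comp_sin_sq hF').const_mul 2).mul (hasDerivAt_sin t)).mul hcos).sub
    ((hasDerivAt_comp_sin_sq hF).mul (hasDerivAt_sin t))).congr_deriv ?_
  simp only [Pi.mul_apply]
  have hpyth : cos t ^ 2 = 1 - sin t ^ 2 := cos_sq' t
  linear_combination 4 * cos t * hode +
    (4 * F'' * sin t ^ 2 * cos t + 2 * F' (sin t ^ 2) * cos t) * hpyth

theorem norm_sin_sq_lt_one {t : ℝ} (ht : t ∈ Ioo (-(π / 2)) (π / 2)) : ‖sin t ^ 2‖ < 1 := by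
  rw [norm_of_nonneg (sq_nonneg _), sin_sq]
  exact sub_lt_self _ (pow_pos (cos_pos_of_mem_Ioo ht) 2)

theorem ordinaryHypergeometric_sin_sq_mul_cos (ω : ℝ) {t : ℝ} (ht : t ∈ Ioo (-(π / 2)) (π / 2)) :
    ₂F₁ ((1 - ω) / 2) ((1 + ω) / 2) (1 / 2) (sin t ^ 2) * cos t = cos (ω * t) := by
  set F : ℝ → ℝ := ₂F₁ ((1 - ω) / 2) ((1 + ω) / 2) (1 / 2)
  have analyticAt_F (s) (hs : s ∈ Ioo (-(π / 2)) (π / 2)) : AnalyticAt ℝ F (sin s ^ 2) :=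
    analyticAt_ordinaryHypergeometric _ _ _ (norm_sin_sq_lt_one hs)
  have hF (s) (hs : s ∈ Ioo (-(π / 2)) (π / 2)) : HasDerivAt F (deriv F (sin s ^ 2)) (sin s ^ 2) :=
    (analyticAt_F s hs).differentiableAt.hasDerivAt
  have hF' (s) (hs : s ∈ Ioo (-(π / 2)) (π / 2)) :
      HasDerivAt (deriv F) (deriv (deriv F) (sin s ^ 2)) (sin s ^ 2) :=
    (analyticAt_F s hs).deriv.differentiableAt.hasDerivAt
  have half_ne_neg (n : ℕ) : (1 / 2 : ℝ) ≠ -n := by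
    linarith [(Nat.cast_nonneg n : (0 : ℝ) ≤ n)]
  have ode (s) (hs : s ∈ Ioo (-(π / 2)) (π / 2)) := ordinaryHypergeometric_differentialEquation
    (a := (1 - ω) / 2) (b := (1 + ω) / 2) half_ne_neg (norm_sin_sq_lt_one hs)
  refine eqOn_Ioo_of_second_deriv_eq_smul (κ := -ω ^ 2) (t₀ := 0) (w := fun s => cos (ω * s))
    (w' := fun s => -(ω * sin (ω * s))) (by simp [pi_pos])
    (fun s hs => hasDerivAt_comp_sin_sq_mul_cos (hF s hs))
    (fun s hs => hasDerivAt_deriv_comp_sin_sq_mul_cos (hF s hs) (hF' s hs) ?_)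
    (fun s _ => ?_) (fun s _ => ?_) (by simp [F]) (by simp) ht
  · linear_combination ode s hs
  · exact (((hasDerivAt_id s).const_mul ω).cos).congr_deriv (by simp; ring)
  · exact (((hasDerivAt_id s).const_mul ω).sin.const_mul ω).neg.congr_deriv (by simp; ring)

theorem ordinaryHypergeometric_one_sixth_five_sixths_one_half :
    ₂F₁ (1 / 6 : ℝ) (5 / 6) (1 / 2) (1 / 2 : ℝ) = √(3 / 2) := by
  have hval := ordinaryHypergeometric_sin_sq_mul_cos (2 / 3) (t := π / 4)
    ⟨by linarith [pi_pos], by linarith [pi_pos]⟩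
  have hangle : 2 / 3 * (π / 4) = π / 6 := by ring
  have hsin : sin (π / 4) ^ 2 = 1 / 2 := by norm_num [sin_pi_div_four, div_pow]
  rw [hangle, hsin, cos_pi_div_four, cos_pi_div_six,
    show (1 - 2 / 3 : ℝ) / 2 = 1 / 6 by norm_num,
    show (1 + 2 / 3 : ℝ) / 2 = 5 / 6 by norm_num] at hval
  rw [sqrt_div (by norm_num), eq_div_iff (by positivity)]
  linarith

end SinSq

section Factorials

open Nat

theorem factorial_two_mul_eq_ascPochhammer {K : Type*} [Field K] [CharZero K] (n : ℕ) :
    ((2 * n)! : K) = 4 ^ n * n ! * (ascPochhammer K n).eval (1 / 2) := by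
  induction n with
  | zero => simp
  | succ n ih =>
    simp only [show 2 * (n + 1) = 2 * n + 1 + 1 by ring, factorial_succ, cast_mul, ih,
      ascPochhammer_succ_eval, pow_succ]
    push_cast
    ring

theorem factorial_six_mul_mul_factorial_eq_ascPochhammer {K : Type*} [Field K] [CharZero K]
    (n : ℕ) :
    ((6 * n)! * n ! : K) = 432 ^ n * (ascPochhammer K n).eval (1 / 6) *
      (ascPochhammer K n).eval (5 / 6) * (3 * n)! * (2 * n)! := by
  induction n with
  | zero => simp
  | succ n ih =>
    simp only [show 6 * (n + 1) = 6 * n + 1 + 1 + 1 + 1 + 1 + 1 by ring,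
      show 3 * (n + 1) = 3 * n + 1 + 1 + 1 by ring, show 2 * (n + 1) = 2 * n + 1 + 1 by ring,
      factorial_succ, ascPochhammer_succ_eval, pow_succ]
    push_cast
    linear_combination (6 * n + 6) * (6 * n + 5) * (6 * n + 4) * (6 * n + 3) * (6 * n + 2) *
      (6 * n + 1) * (n + 1) * ih

theorem cubicE_eq_ascPochhammer (r : ℕ) :
    cubicE r = (3 / 2) ^ r * (ascPochhammer ℝ r).eval (1 / 6) *
      (ascPochhammer ℝ r).eval (5 / 6) / r ! := by
  have hpow : (432 : ℝ) ^ r = (3 / 2) ^ r * (6 ^ (2 * r) * 2 ^ (3 * r)) := by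
    rw [pow_mul, pow_mul, ← mul_pow, ← mul_pow]
    norm_num
  have hsix := factorial_six_mul_mul_factorial_eq_ascPochhammer (K := ℝ) r
  rw [cubicE, div_eq_div_iff (by positivity) (by positivity), hsix, hpow]
  norm_num [factorial]
  ring

theorem cubicE_term_eq (r : ℕ) :
    (3 : ℝ)⁻¹ ^ r * cubicE r * 4 ^ r * r ! / (2 * r)! =
      ordinaryHypergeometricCoefficient (1 / 6 : ℝ) (5 / 6) (1 / 2) r * (1 / 2) ^ r := by
  have hpow : (1 / 2 : ℝ) ^ r = 3⁻¹ ^ r * (3 / 2) ^ r := by rw [← mul_pow]; norm_num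
  have hhalf : (ascPochhammer ℝ r).eval (1 / 2) ≠ 0 := (ascPochhammer_pos r _ (by norm_num)).ne'
  rw [cubicE_eq_ascPochhammer, factorial_two_mul_eq_ascPochhammer, hpow]
  field_simp

end Factorials

theorem stmt16 :
    HasSum
      (fun r : ℕ =>
        (3 : ℝ)⁻¹ ^ r * cubicE r * 4 ^ r * (r.factorial : ℝ) / ((2 * r).factorial : ℝ))
      (Real.sqrt (3 / 2)) ∧
    HasSum
      (fun r : ℕ =>
        (Polynomial.eval (1 / 6 : ℝ) (ascPochhammer ℝ r) *
            Polynomial.eval (5 / 6 : ℝ) (ascPochhammer ℝ r) /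
            Polynomial.eval (1 / 2 : ℝ) (ascPochhammer ℝ r)) *
          (1 / 2 : ℝ) ^ r / (r.factorial : ℝ))
      (Real.sqrt (3 / 2)) := by
  have hsum : HasSum (fun r : ℕ =>
      ordinaryHypergeometricCoefficient (1 / 6 : ℝ) (5 / 6) (1 / 2) r * (1 / 2) ^ r)
      (Real.sqrt (3 / 2)) := by
    rw [← ordinaryHypergeometric_one_sixth_five_sixths_one_half]
    exact hasSum_ordinaryHypergeometric _ _ _ (by norm_num)
  refine ⟨by simpa only [cubicE_term_eq] using hsum, hsum.congr_fun fun r => ?_⟩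
  ring
end

section
/- For every real x, the double series identity ∑_{r≥0} 3^{−r} · e_r · F_r(x) = √(3/(2π)) · exp(4x³/27) holds, where F_r(x) := ∑_{k≥0} (x^k/k!) · (1/Γ(1/2 + r − 2k/3)) and e_r := (6r)!/( (3!)^{2r} · 2^{3r} · (3r)! · (2r)! ); all the series involved converge absolutely. -/
/-- `F_r(x) = ∑_{k≥0} (x^k/k!) / Γ(1/2 + r − 2k/3)`. -/
noncomputable def Ffun (r : ℕ) (x : ℝ) : ℝ :=
  ∑' k : ℕ, x ^ k / k.factorial * (1 / Real.Gamma (1 / 2 + r - 2 * k / 3))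

/-!
The weights are `3⁻ʳ e_r = (1/6)_r (5/6)_r / (r! 2ʳ)`, so `∑ r, 3⁻ʳ e_r / Γ(c + r)` is the Gauss
hypergeometric series `₂F₁(1/6, 5/6; c; 1/2) / Γ(c)`. By Bailey's theorem it equals
`2^(1-c) √π / (Γ((c + a)/2) Γ((c + 1 - a)/2))` with `a = 1/6`: both sides are multiplied by the same
factor under `c ↦ c + 2` and, after multiplication by `Γ(c)`, both tend to `1` along `c + 2ℕ`.

Summing over `r` first, the coefficient of `x ^ k / k!` is this value at `c = 1/2 - 2k/3`, namely
`2^(1/2 + 2k/3) √π / (Γ((1 - k)/3) Γ((2 - k)/3))`. One of the two Gamma factors has a pole unless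
`3 ∣ k`, and the terms with `k = 3m` add up to the exponential series in `4x³/27`.

The interchange is legitimate because `1 / Γ(c + r - αk)` is at most `(r + αk)^(αk) / r!` up to
lower-order factors, which for `α < 1` makes the `(r, k)` term `O(e^(δr) e^(-k) / r!)` for
every `δ > 0`.
-/

open Filter Topology
open scoped Nat

section GaussSeries

variable {a b c z : ℂ}

/-- The `n`-th term of the regularized Gauss series `₂F₁(a, b; c; z) / Γ(c)`; it makes sense for
every `c`, including the poles of `₂F₁`. -/
noncomputable def gaussTerm (a b c z : ℂ) (n : ℕ) : ℂ :=
  (ascPochhammer ℂ n).eval a * (ascPochhammer ℂ n).eval b / n ! * (Complex.Gamma (c + n))⁻¹ * z ^ n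

lemma regularizedGaussHGFunSeries_apply (n : ℕ) :
    (Complex.regularizedGaussHGFunSeries a b c n fun _ => z) = gaussTerm a b c z n := by
  rw [FormalMultilinearSeries.apply_eq_pow_smul_coeff, smul_eq_mul,
    Complex.coeff_regularizedGaussHGFunSeries, gaussTerm]
  ring

lemma mem_eball_radius_regularizedGaussHGFunSeries (hz : ‖z‖ < 1) :
    z ∈ Metric.eball (0 : ℂ) (Complex.regularizedGaussHGFunSeries a b c).radius := by
  rw [mem_eball_zero_iff]
  refine lt_of_lt_of_le ?_ (Complex.radius_regularizedGaussHGFunSeries_ge_one a b c)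
  rwa [enorm_eq_nnnorm, ENNReal.coe_lt_one_iff, ← NNReal.coe_lt_one, coe_nnnorm]

lemma summable_norm_gaussTerm (hz : ‖z‖ < 1) : Summable fun n => ‖gaussTerm a b c z n‖ := by
  simpa only [regularizedGaussHGFunSeries_apply] using
    (Complex.regularizedGaussHGFunSeries a b c).summable_norm_apply
      (mem_eball_radius_regularizedGaussHGFunSeries hz)

lemma hasSum_gaussTerm (hz : ‖z‖ < 1) :
    HasSum (gaussTerm a b c z) (Complex.regularizedGaussHGFun a b c z) := by
  have hsum := (Complex.regularizedGaussHGFunSeries a b c).hasSum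
    (mem_eball_radius_regularizedGaussHGFunSeries hz)
  simp only [regularizedGaussHGFunSeries_apply] at hsum
  exact hsum

lemma succ_mul_gaussTerm_succ (a b c z : ℂ) (n : ℕ) :
    (n + 1) * gaussTerm a b c z (n + 1) =
      a * b * z * gaussTerm (a + 1) (b + 1) (c + 1) z n := by
  have hn : (n : ℂ) + 1 ≠ 0 := n.cast_add_one_ne_zero
  simp only [gaussTerm, ascPochhammer_succ_left, Polynomial.eval_mul, Polynomial.eval_X,
    Polynomial.eval_comp, Polynomial.eval_add, Polynomial.eval_one, Nat.factorial_succ]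
  push_cast
  rw [add_right_comm c 1 (n : ℂ), add_assoc c]
  field_simp
  ring

lemma summable_natCast_mul_gaussTerm (hz : ‖z‖ < 1) :
    Summable fun n : ℕ => n * gaussTerm a b c z n := by
  rw [← summable_nat_add_iff 1]
  simp only [Nat.cast_add, Nat.cast_one, succ_mul_gaussTerm_succ]
  exact (hasSum_gaussTerm hz).summable.mul_left _

lemma gaussTerm_half_contiguous (a c : ℂ) (n : ℕ) :
    (c + a) * (c + 1 - a) * gaussTerm a (1 - a) (c + 2) (1 / 2) n -
        gaussTerm a (1 - a) c (1 / 2) n =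
      2 * ((n + 1 : ℕ) * gaussTerm a (1 - a) (c + 1) (1 / 2) (n + 1) -
        n * gaussTerm a (1 - a) (c + 1) (1 / 2) n) := by
  have hn : (n : ℂ) + 1 ≠ 0 := n.cast_add_one_ne_zero
  have shift₁ : (Complex.Gamma (c + 1 + n))⁻¹ = (c + 1 + n) * (Complex.Gamma (c + 2 + n))⁻¹ := by
    rw [Complex.one_div_Gamma_eq_self_mul_one_div_Gamma_add_one]; ring_nf
  have shift₂ : (Complex.Gamma (c + n))⁻¹ =
      (c + n) * ((c + 1 + n) * (Complex.Gamma (c + 2 + n))⁻¹) := by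
    rw [Complex.one_div_Gamma_eq_self_mul_one_div_Gamma_add_one, ← shift₁]; ring_nf
  have shift₃ : c + 1 + ((n + 1 : ℕ) : ℂ) = c + 2 + n := by push_cast; ring
  simp only [gaussTerm, ascPochhammer_succ_eval, Nat.factorial_succ, shift₁, shift₂, shift₃]
  push_cast
  field_simp
  ring

lemma regularizedGaussHGFun_half_add_two (a c : ℂ) :
    (c + a) * (c + 1 - a) * Complex.regularizedGaussHGFun a (1 - a) (c + 2) (1 / 2) =
      Complex.regularizedGaussHGFun a (1 - a) c (1 / 2) := by
  have hz : ‖(1 / 2 : ℂ)‖ < 1 := by norm_num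
  have hW : Summable fun n : ℕ => n * gaussTerm a (1 - a) (c + 1) (1 / 2) n :=
    summable_natCast_mul_gaussTerm hz
  have hdiff := ((hasSum_gaussTerm (a := a) (b := 1 - a) (c := c + 2) hz).mul_left
    ((c + a) * (c + 1 - a))).sub (hasSum_gaussTerm (a := a) (b := 1 - a) (c := c) hz)
  simp only [gaussTerm_half_contiguous] at hdiff
  have htel := (((summable_nat_add_iff 1).2 hW).hasSum.sub hW.hasSum).mul_left 2
  have hshift := hW.tsum_eq_zero_add
  rw [Nat.cast_zero, zero_mul, zero_add] at hshift
  rw [← hshift, sub_self, mul_zero] at htel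
  exact sub_eq_zero.1 (hdiff.unique htel)

lemma factorial_le_norm_ascPochhammer_eval (hc : 1 ≤ c.re) (n : ℕ) :
    n ! ≤ ‖(ascPochhammer ℂ n).eval c‖ := by
  induction n with
  | zero => simp
  | succ n ih =>
    have hfactor : (n + 1 : ℝ) ≤ ‖c + n‖ := by
      refine le_trans ?_ (Complex.re_le_norm _)
      rw [Complex.add_re, Complex.natCast_re]
      linarith
    rw [ascPochhammer_succ_eval, norm_mul, Nat.factorial_succ, mul_comm]
    push_cast
    gcongr

lemma tendsto_ordinaryHypergeometric_add_natCast (a b c : ℂ) (hz : ‖z‖ < 1) :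
    Tendsto (fun m : ℕ => ₂F₁ a b (c + m) z) atTop (𝓝 1) := by
  have hre : ∀ᶠ m : ℕ in atTop, 1 ≤ (c + m).re := by
    filter_upwards [(tendsto_natCast_atTop_atTop (R := ℝ)).eventually_ge_atTop (1 - c.re)] with m hm
    rw [Complex.add_re, Complex.natCast_re]
    linarith
  have hnorm : Tendsto (fun m : ℕ => ‖c + m‖) atTop atTop :=
    tendsto_norm_atTop_iff_cobounded.2 <|
      (tendsto_const_add_cobounded c).comp tendsto_natCast_atTop_cobounded
  have hterm (n : ℕ) : Tendsto (fun m : ℕ => ((n ! : ℂ)⁻¹ * (ascPochhammer ℂ n).eval a *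
      (ascPochhammer ℂ n).eval b * ((ascPochhammer ℂ n).eval (c + m))⁻¹) • z ^ n) atTop
      (𝓝 (if n = 0 then 1 else 0)) := by
    rcases eq_or_ne n 0 with rfl | hn
    · simp
    · have hdeg : 0 < (ascPochhammer ℂ n).degree := by
        rw [← Polynomial.natDegree_pos_iff_degree_pos, ascPochhammer_natDegree]; omega
      have hinv := tendsto_inv₀_cobounded.comp <| tendsto_norm_atTop_iff_cobounded.1
        ((ascPochhammer ℂ n).tendsto_norm_atTop hdeg hnorm)
      simpa [hn] using (hinv.const_mul _).smul_const (z ^ n)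
  simp only [ordinaryHypergeometric_eq_tsum]
  rw [← tsum_ite_eq 0 (fun _ => (1 : ℂ))]
  refine tendsto_tsum_of_dominated_convergence
    (summable_norm_gaussTerm (a := a) (b := b) (c := 1) hz) hterm ?_
  filter_upwards [hre] with m hm n
  have hfact : Complex.Gamma (1 + n) = n ! := by rw [add_comm, Complex.Gamma_nat_eq_factorial]
  have hle := factorial_le_norm_ascPochhammer_eval hm n
  rw [gaussTerm, hfact]
  simp only [norm_mul, norm_inv, norm_div, smul_eq_mul, Complex.norm_natCast, norm_pow]
  rw [← div_eq_inv_mul, div_mul_eq_mul_div]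
  gcongr

lemma tendsto_Gamma_mul_regularizedGaussHGFun_add_natCast (a b c : ℂ) (hz : ‖z‖ < 1) :
    Tendsto (fun m : ℕ => Complex.Gamma (c + m) * Complex.regularizedGaussHGFun a b (c + m) z)
      atTop (𝓝 1) := by
  refine (tendsto_ordinaryHypergeometric_add_natCast a b c hz).congr' ?_
  obtain ⟨N, hN⟩ := exists_nat_gt (-c.re)
  filter_upwards [eventually_ge_atTop N] with m hm
  have hre : 0 < (c + m).re := by
    have hm : (N : ℝ) ≤ m := Nat.cast_le.2 hm
    rw [Complex.add_re, Complex.natCast_re]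
    linarith
  have hpole (k : ℕ) : c + m ≠ -k := fun h => by
    rw [h, Complex.neg_re, Complex.natCast_re] at hre
    linarith [k.cast_nonneg (α := ℝ)]
  rw [← Complex.ordinaryHypergeometric_div_Gamma_eq hpole,
    mul_div_cancel₀ _ (Complex.Gamma_ne_zero_of_re_pos hre)]

end GaussSeries

section GammaAsymptotics

lemma tendsto_cpow_mul_factorial_div_Gamma_of_re_pos {s : ℂ} (hs : 0 < s.re) :
    Tendsto (fun n : ℕ => (n : ℂ) ^ s * n ! / Complex.Gamma (s + (n + 1))) atTop (𝓝 1) := by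
  have hΓ : Complex.Gamma s ≠ 0 := Complex.Gamma_ne_zero_of_re_pos hs
  have hprod (n : ℕ) :
      Complex.Gamma (s + n) = Complex.Gamma s * ∏ j ∈ Finset.range n, (s + j) := by
    induction n with
    | zero => simp
    | succ n ih =>
      have hne : s + n ≠ 0 := fun h => by
        have hre := congrArg Complex.re h
        rw [Complex.add_re, Complex.natCast_re, Complex.zero_re] at hre
        linarith [n.cast_nonneg (α := ℝ)]
      rw [Nat.cast_succ, ← add_assoc, Complex.Gamma_add_one _ hne, ih, Finset.prod_range_succ]
      ring
  have hlim := (Complex.GammaSeq_tendsto_Gamma s).div_const (Complex.Gamma s)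
  rw [div_self hΓ] at hlim
  refine hlim.congr fun n => ?_
  rw [Complex.GammaSeq, ← Nat.cast_succ, hprod, div_div, mul_comm (Complex.Gamma s)]

lemma tendsto_cpow_mul_factorial_div_Gamma (s : ℂ) :
    Tendsto (fun n : ℕ => (n : ℂ) ^ s * n ! / Complex.Gamma (s + (n + 1))) atTop (𝓝 1) := by
  have descend (s : ℂ)
      (hs : Tendsto (fun n : ℕ => (n : ℂ) ^ (s + 1) * n ! / Complex.Gamma (s + 1 + (n + 1)))
        atTop (𝓝 1)) :
      Tendsto (fun n : ℕ => (n : ℂ) ^ s * n ! / Complex.Gamma (s + (n + 1))) atTop (𝓝 1) := by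
    have hratio : Tendsto (fun n : ℕ => (s + 1) * (n : ℂ)⁻¹ + 1) atTop (𝓝 1) := by
      simpa using (tendsto_inv_atTop_nhds_zero_nat (𝕜 := ℂ)).const_mul (s + 1) |>.add_const 1
    have hlim := hs.mul hratio
    rw [one_mul] at hlim
    refine hlim.congr' ?_
    filter_upwards [eventually_ne_atTop 0] with n hn
    have hn : (n : ℂ) ≠ 0 := Nat.cast_ne_zero.2 hn
    simp only [div_eq_mul_inv]
    rw [Complex.one_div_Gamma_eq_self_mul_one_div_Gamma_add_one (s + (n + 1)),
      Complex.cpow_add _ _ hn, Complex.cpow_one, add_right_comm s 1]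
    field_simp
    ring
  have shifted (m : ℕ) (s : ℂ) (hs : 0 < (s + m).re) :
      Tendsto (fun n : ℕ => (n : ℂ) ^ s * n ! / Complex.Gamma (s + (n + 1))) atTop (𝓝 1) := by
    induction m generalizing s with
    | zero => exact tendsto_cpow_mul_factorial_div_Gamma_of_re_pos (by simpa using hs)
    | succ m ih =>
      exact descend s (ih (s + 1) (by rwa [add_right_comm, add_assoc, ← Nat.cast_succ]))
  obtain ⟨m, hm⟩ := exists_nat_gt (-s.re)
  refine shifted m s ?_
  rw [Complex.add_re, Complex.natCast_re]
  linarith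

lemma tendsto_Gamma_add_natCast_mul_div {s₁ s₂ s₃ s₄ : ℂ} (h : s₁ + s₂ = s₃ + s₄) :
    Tendsto (fun n : ℕ => Complex.Gamma (s₁ + n) * Complex.Gamma (s₂ + n) /
      (Complex.Gamma (s₃ + n) * Complex.Gamma (s₄ + n))) atTop (𝓝 1) := by
  have hlim := ((tendsto_cpow_mul_factorial_div_Gamma (s₃ - 1)).mul
    (tendsto_cpow_mul_factorial_div_Gamma (s₄ - 1))).div
    ((tendsto_cpow_mul_factorial_div_Gamma (s₁ - 1)).mul
    (tendsto_cpow_mul_factorial_div_Gamma (s₂ - 1))) (by norm_num)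
  rw [mul_one, div_one] at hlim
  refine hlim.congr' ?_
  filter_upwards [eventually_ne_atTop 0] with n hn
  have hn : (n : ℂ) ≠ 0 := Nat.cast_ne_zero.2 hn
  have hpow : (n : ℂ) ^ (s₁ - 1) * (n : ℂ) ^ (s₂ - 1) =
      (n : ℂ) ^ (s₃ - 1) * (n : ℂ) ^ (s₄ - 1) := by
    rw [← Complex.cpow_add _ _ hn, ← Complex.cpow_add _ _ hn]
    congr 1
    linear_combination h
  have hne : (n : ℂ) ^ (s₃ - 1) * (n : ℂ) ^ (s₄ - 1) * (n ! * n !) ≠ 0 := by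
    simp [Complex.cpow_eq_zero_iff, hn, n.factorial_ne_zero]
  simp only [Pi.div_apply, sub_add_add_cancel]
  rw [div_mul_div_comm, div_mul_div_comm, mul_mul_mul_comm (_ ^ (s₃ - 1)),
    mul_mul_mul_comm (_ ^ (s₁ - 1)), hpow, div_div_div_cancel_left' _ _ hne]

end GammaAsymptotics

section Bailey

/-- The closed form in Bailey's theorem for `₂F₁(a, 1 - a; c; 1/2) / Γ(c)`. -/
noncomputable def baileyValue (a c : ℂ) : ℂ :=
  2 ^ (1 - c) * √Real.pi * (Complex.Gamma ((c + a) / 2))⁻¹ * (Complex.Gamma ((c + 1 - a) / 2))⁻¹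

lemma baileyValue_add_two (a c : ℂ) :
    (c + a) * (c + 1 - a) * baileyValue a (c + 2) = baileyValue a c := by
  have hpow : (2 : ℂ) ^ (1 - c) = 2 ^ (1 - (c + 2)) * 4 := by
    rw [show (1 - c : ℂ) = 1 - (c + 2) + (2 : ℕ) by push_cast; ring,
      Complex.cpow_add _ _ two_ne_zero, Complex.cpow_natCast]
    norm_num
  have shift (w : ℂ) : (Complex.Gamma (w / 2))⁻¹ = w / 2 * (Complex.Gamma ((w + 2) / 2))⁻¹ := by
    rw [Complex.one_div_Gamma_eq_self_mul_one_div_Gamma_add_one, add_div w 2 2,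
      div_self two_ne_zero]
  rw [baileyValue, baileyValue, shift (c + a), shift (c + 1 - a), hpow,
    show c + 2 + a = c + a + 2 by ring, show c + 2 + 1 - a = c + 1 - a + 2 by ring]
  ring

lemma tendsto_Gamma_mul_baileyValue (a c : ℂ) :
    Tendsto (fun n : ℕ => Complex.Gamma (c + 2 * n) * baileyValue a (c + 2 * n)) atTop (𝓝 1) := by
  refine (tendsto_Gamma_add_natCast_mul_div (s₁ := c / 2) (s₂ := c / 2 + 1 / 2)
    (s₃ := (c + a) / 2) (s₄ := (c + 1 - a) / 2) (by ring)).congr fun n => ?_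
  have hdup := Complex.Gamma_mul_Gamma_add_half (c / 2 + n)
  rw [show 2 * (c / 2 + n) = c + 2 * n by ring, add_right_comm] at hdup
  rw [hdup, baileyValue, show (c + 2 * n + a) / 2 = (c + a) / 2 + n by ring,
    show (c + 2 * n + 1 - a) / 2 = (c + 1 - a) / 2 + n by ring, div_eq_mul_inv, mul_inv]
  ring

theorem regularizedGaussHGFun_half_eq_baileyValue (a c : ℂ) :
    Complex.regularizedGaussHGFun a (1 - a) c (1 / 2) = baileyValue a c := by
  let G (c : ℂ) : ℂ := Complex.regularizedGaussHGFun a (1 - a) c (1 / 2)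
  have hG_add_two (c : ℂ) : (c + a) * (c + 1 - a) * G (c + 2) = G c :=
    regularizedGaussHGFun_half_add_two a c
  have hfactor (n : ℕ) :
      ∃ P, G c = P * G (c + 2 * n) ∧ baileyValue a c = P * baileyValue a (c + 2 * n) := by
    induction n with
    | zero => exact ⟨1, by simp⟩
    | succ n ih =>
      obtain ⟨P, hP, hP'⟩ := ih
      refine ⟨P * ((c + 2 * n + a) * (c + 2 * n + 1 - a)), ?_⟩
      rw [hP, hP', ← baileyValue_add_two, ← hG_add_two, Nat.cast_succ, mul_add_one, ← add_assoc]
      exact ⟨(mul_assoc _ _ _).symm, (mul_assoc _ _ _).symm⟩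
  have hG_lim : Tendsto (fun n : ℕ => Complex.Gamma (c + 2 * n) * G (c + 2 * n)) atTop (𝓝 1) := by
    have hz : ‖(1 / 2 : ℂ)‖ < 1 := by norm_num
    simpa [Function.comp_def, G] using
      (tendsto_Gamma_mul_regularizedGaussHGFun_add_natCast a (1 - a) c hz).comp
        (tendsto_id.const_mul_atTop' two_pos)
  have h₁ := (tendsto_Gamma_mul_baileyValue a c).const_mul (G c)
  have h₂ := hG_lim.mul_const (baileyValue a c)
  rw [mul_one] at h₁
  rw [one_mul] at h₂
  refine tendsto_nhds_unique h₁ (h₂.congr fun n => ?_)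
  obtain ⟨P, hP, hP'⟩ := hfactor n
  rw [hP, hP']
  ring

end Bailey

section WrightFunction

variable {α δ : ℝ}

lemma inv_Gamma_eq_self_mul_inv_Gamma_add_one (s : ℝ) :
    (Real.Gamma s)⁻¹ = s * (Real.Gamma (s + 1))⁻¹ := by
  rcases eq_or_ne s 0 with rfl | hs
  · simp
  · rw [Real.Gamma_add_one hs, mul_inv, mul_inv_cancel_left₀ hs]

lemma abs_inv_Gamma_le (s : ℝ) (n : ℕ) :
    |(Real.Gamma s)⁻¹| ≤ (|s| + n) ^ n * |(Real.Gamma (s + n))⁻¹| := by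
  induction n generalizing s with
  | zero => simp
  | succ n ih =>
    have hs : |s + 1| + n ≤ |s| + (n + 1 : ℕ) := by
      push_cast
      linarith [abs_add_le s 1, abs_one (α := ℝ)]
    calc |(Real.Gamma s)⁻¹| = |s| * |(Real.Gamma (s + 1))⁻¹| := by
          rw [inv_Gamma_eq_self_mul_inv_Gamma_add_one, abs_mul]
      _ ≤ (|s| + (n + 1 : ℕ)) * ((|s + 1| + n) ^ n * |(Real.Gamma (s + 1 + n))⁻¹|) := by
          gcongr
          · exact le_add_of_nonneg_right (Nat.cast_nonneg _)
          · exact ih (s + 1)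
      _ ≤ (|s| + (n + 1 : ℕ)) * ((|s| + (n + 1 : ℕ)) ^ n * |(Real.Gamma (s + 1 + n))⁻¹|) := by
          gcongr
      _ = (|s| + (n + 1 : ℕ)) ^ (n + 1) * |(Real.Gamma (s + (n + 1 : ℕ)))⁻¹| := by
          rw [← mul_assoc, ← pow_succ', Nat.cast_succ, add_right_comm s, add_assoc s]

lemma succ_factorial_le_Gamma {y : ℝ} {n : ℕ} (hy : n + 2 ≤ y) : (n + 1)! ≤ Real.Gamma y := by
  have hn : (2 : ℝ) ≤ n + 2 := by linarith [n.cast_nonneg (α := ℝ)]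
  calc ((n + 1)! : ℝ) = Real.Gamma (n + 2) := by
        rw [← Real.Gamma_nat_eq_factorial, Nat.cast_succ, add_assoc, one_add_one_eq_two]
    _ ≤ Real.Gamma y := Real.Gamma_strictMonoOn_Ici.monotoneOn hn (hn.trans hy) hy

lemma factorial_mul_abs_inv_Gamma_le (c : ℝ) {t : ℝ} (ht : 0 ≤ t) (r : ℕ) :
    r ! * |(Real.Gamma (c + r - t))⁻¹| ≤ (r + 2 * t + 2 * |c| + 3) ^ (t + |c| + 3) := by
  set n := ⌈|c| + t⌉₊ + 2 with hn
  have hct : 0 ≤ |c| + t := by positivity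
  have hn_ge : |c| + t + 2 ≤ n := by
    rw [hn]; push_cast; linarith [Nat.le_ceil (|c| + t)]
  have hn_le : n ≤ t + |c| + 3 := by
    rw [hn]; push_cast; linarith [Nat.ceil_lt_add_one hct]
  have hΓ : r ! ≤ Real.Gamma (c + r - t + n) :=
    (Nat.cast_le.2 (Nat.factorial_le r.le_succ)).trans
      (succ_factorial_le_Gamma (by linarith [neg_abs_le c]))
  have hΓ_pos : 0 < Real.Gamma (c + r - t + n) := lt_of_lt_of_le (by positivity) hΓ
  have hratio : r ! * |(Real.Gamma (c + r - t + n))⁻¹| ≤ 1 := by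
    rw [abs_inv, abs_of_pos hΓ_pos, ← div_eq_mul_inv]
    exact div_le_one_of_le₀ hΓ hΓ_pos.le
  have hbase : |c + r - t| + n ≤ r + 2 * t + 2 * |c| + 3 := by
    have habs : |c + r - t| ≤ |c| + r + t := by
      rw [abs_le]
      constructor <;> linarith [neg_abs_le c, le_abs_self c, r.cast_nonneg (α := ℝ)]
    linarith
  have hone : 1 ≤ r + 2 * t + 2 * |c| + 3 := by
    linarith [abs_nonneg c, r.cast_nonneg (α := ℝ)]
  calc r ! * |(Real.Gamma (c + r - t))⁻¹|
      ≤ r ! * ((|c + r - t| + n) ^ n * |(Real.Gamma (c + r - t + n))⁻¹|) := by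
        gcongr
        exact abs_inv_Gamma_le _ n
    _ = (|c + r - t| + n) ^ n * (r ! * |(Real.Gamma (c + r - t + n))⁻¹|) := by ring
    _ ≤ (|c + r - t| + n) ^ n := mul_le_of_le_one_right (by positivity) hratio
    _ ≤ (r + 2 * t + 2 * |c| + 3) ^ (n : ℝ) := by rw [Real.rpow_natCast]; gcongr
    _ ≤ (r + 2 * t + 2 * |c| + 3) ^ (t + |c| + 3) := Real.rpow_le_rpow_of_exponent_le hone hn_le

lemma exists_rpow_add_log_le {B E : ℝ} (hB : 0 ≤ B) (hE : 0 ≤ E) (hα₀ : 0 ≤ α) (hα₁ : α < 1)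
    (hδ : 0 < δ) : ∃ K, ∀ y, 1 ≤ y → B * y ^ α + E * Real.log y ≤ δ * y + K := by
  have hrpow : (fun y : ℝ => y ^ α) =o[atTop] id := by
    refine Asymptotics.isLittleO_of_tendsto' ?_ ((tendsto_rpow_neg_atTop (sub_pos.2 hα₁)).congr' ?_)
    · filter_upwards [eventually_ne_atTop 0] with y hy h using absurd h hy
    · filter_upwards [eventually_gt_atTop 0] with y hy
      rw [neg_sub, Real.rpow_sub_one hy.ne', id_eq]
  have hsmall := ((hrpow.const_mul_left B).add
    (Real.isLittleO_log_id_atTop.const_mul_left E)).bound hδ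
  obtain ⟨y₀, hy₀⟩ := eventually_atTop.1 (hsmall.and (eventually_ge_atTop 1))
  have hy₀_one := (hy₀ y₀ le_rfl).2
  have hK : 0 ≤ B * y₀ ^ α + E * Real.log y₀ := by
    have := Real.log_nonneg hy₀_one
    positivity
  refine ⟨B * y₀ ^ α + E * Real.log y₀, fun y hy => ?_⟩
  rcases le_total y₀ y with hlarge | hle
  · have hnorm := (hy₀ y hlarge).1
    rw [id_eq, Real.norm_of_nonneg (r := y) (zero_le_one.trans hy)] at hnorm
    linarith [(le_abs_self _).trans hnorm]
  · have hmono : B * y ^ α + E * Real.log y ≤ B * y₀ ^ α + E * Real.log y₀ := by gcongr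
    linarith [mul_nonneg hδ.le (zero_le_one.trans hy)]

/-- The `k`-th term `x ^ k / (k! Γ(c - α k))` of the Wright function `φ(-α, c; x)`. -/
noncomputable def wrightTerm (α c x : ℝ) (k : ℕ) : ℝ :=
  x ^ k / k ! * (1 / Real.Gamma (c - α * k))

lemma factorial_mul_abs_wrightTerm_le (c x : ℝ) {M : ℝ} (hM : 0 < M) (hα : 0 ≤ α) (r k : ℕ) :
    r ! * |wrightTerm α (c + r) x k| ≤ (M ^ k)⁻¹ *
      Real.exp (M * |x| * (r + 2 * (α * k) + 2 * |c| + 3) ^ α +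
        (|c| + 3) * Real.log (r + 2 * (α * k) + 2 * |c| + 3)) := by
  set y : ℝ := r + 2 * (α * k) + 2 * |c| + 3 with hy
  have hy_pos : 0 < y := by positivity
  have hΓ : r ! * |(Real.Gamma (c + r - α * k))⁻¹| ≤
      (y ^ α) ^ k * Real.exp ((|c| + 3) * Real.log y) :=
    (factorial_mul_abs_inv_Gamma_le c (by positivity) r).trans_eq <| by
      rw [← hy, add_assoc (α * k), Real.rpow_add hy_pos, Real.rpow_mul_natCast hy_pos.le,
        Real.rpow_def_of_pos hy_pos (|c| + 3), mul_comm (Real.log y)]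
  calc r ! * |wrightTerm α (c + r) x k|
      = |x| ^ k / k ! * (r ! * |(Real.Gamma (c + r - α * k))⁻¹|) := by
        rw [wrightTerm, one_div, abs_mul, abs_div, abs_pow, Nat.abs_cast]; ring
    _ ≤ |x| ^ k / k ! * ((y ^ α) ^ k * Real.exp ((|c| + 3) * Real.log y)) := by gcongr
    _ = (M ^ k)⁻¹ * ((M * |x| * y ^ α) ^ k / k ! * Real.exp ((|c| + 3) * Real.log y)) := by
        rw [mul_pow, mul_pow]; field_simp
    _ ≤ (M ^ k)⁻¹ * (Real.exp (M * |x| * y ^ α) * Real.exp ((|c| + 3) * Real.log y)) := by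
        gcongr
        exact Real.pow_div_factorial_le_exp _ (by positivity) k
    _ = _ := by rw [Real.exp_add]

lemma exists_factorial_mul_abs_wrightTerm_le (c x : ℝ) (hα₀ : 0 ≤ α) (hα₁ : α < 1) (hδ : 0 < δ) :
    ∃ K, 0 ≤ K ∧ ∀ r k : ℕ,
      r ! * |wrightTerm α (c + r) x k| ≤ K * Real.exp (δ * r) * Real.exp (-k) := by
  obtain ⟨K, hK⟩ := exists_rpow_add_log_le (B := Real.exp (2 * δ + 1) * |x|) (E := |c| + 3)
    (by positivity) (by positivity) hα₀ hα₁ hδ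
  refine ⟨Real.exp (δ * (2 * |c| + 3) + K), (Real.exp_pos _).le, fun r k => ?_⟩
  have hy : 1 ≤ r + 2 * (α * k) + 2 * |c| + 3 := by
    have : 0 ≤ r + 2 * (α * k) + 2 * |c| := by positivity
    linarith
  refine (factorial_mul_abs_wrightTerm_le c x (Real.exp_pos (2 * δ + 1)) hα₀ r k).trans ?_
  rw [← Real.exp_nat_mul, ← Real.exp_neg, ← Real.exp_add, ← Real.exp_add, ← Real.exp_add,
    Real.exp_le_exp]
  have hαk : δ * (α * k) ≤ δ * k := by
    gcongr
    exact mul_le_of_le_one_left (Nat.cast_nonneg k) hα₁.le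
  linarith [hK _ hy]

lemma summable_abs_wrightTerm (c x : ℝ) (hα₀ : 0 ≤ α) (hα₁ : α < 1) :
    Summable fun k => |wrightTerm α c x k| := by
  obtain ⟨K, -, hK⟩ := exists_factorial_mul_abs_wrightTerm_le c x hα₀ hα₁ one_pos
  refine .of_nonneg_of_le (fun _ => abs_nonneg _) (fun k => ?_)
    (Real.summable_exp_neg_nat.mul_left K)
  simpa using hK 0 k

lemma summable_mul_wrightTerm (c x : ℝ) (hα₀ : 0 ≤ α) (hα₁ : α < 1) {p : ℕ → ℝ} {R : ℝ}
    (hR : 1 < R) (hp : Summable fun r => |p r| / r ! * R ^ r) :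
    Summable fun q : ℕ × ℕ => p q.1 * wrightTerm α (c + q.1) x q.2 := by
  obtain ⟨K, hK₀, hK⟩ := exists_factorial_mul_abs_wrightTerm_le c x hα₀ hα₁ (Real.log_pos hR)
  refine .of_norm_bounded ((hp.mul_left K).mul_of_nonneg Real.summable_exp_neg_nat
    (fun r => by positivity) fun k => (Real.exp_pos _).le) fun ⟨r, k⟩ => ?_
  have hexp : Real.exp (Real.log R * r) = R ^ r := by
    rw [mul_comm, Real.exp_nat_mul, Real.exp_log (by positivity)]
  calc ‖p r * wrightTerm α (c + r) x k‖
      = |p r| / r ! * (r ! * |wrightTerm α (c + r) x k|) := by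
        rw [norm_mul, Real.norm_eq_abs, Real.norm_eq_abs]; field_simp
    _ ≤ |p r| / r ! * (K * Real.exp (Real.log R * r) * Real.exp (-k)) :=
        mul_le_mul_of_nonneg_left (hK r k) (by positivity)
    _ = K * (|p r| / r ! * R ^ r) * Real.exp (-k) := by rw [hexp]; ring

theorem hasSum_mul_tsum_wrightTerm (c x : ℝ) (hα₀ : 0 ≤ α) (hα₁ : α < 1) {p S : ℕ → ℝ} {R T : ℝ}
    (hR : 1 < R) (hp : Summable fun r => |p r| / r ! * R ^ r)
    (hS : ∀ k : ℕ, HasSum (fun r : ℕ => p r * (1 / Real.Gamma (c - α * k + r))) (S k))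
    (hT : HasSum (fun k => x ^ k / k ! * S k) T) :
    HasSum (fun r => p r * ∑' k, wrightTerm α (c + r) x k) T := by
  have hsum := summable_mul_wrightTerm c x hα₀ hα₁ hR hp
  have hcol (k : ℕ) : HasSum (fun r : ℕ => p r * wrightTerm α (c + r) x k) (x ^ k / k ! * S k) := by
    refine ((hS k).mul_left (x ^ k / k !)).congr_fun fun r => ?_
    rw [wrightTerm, add_sub_right_comm]
    ring
  have hrow (r : ℕ) : HasSum (fun k => p r * wrightTerm α (c + r) x k)
      (p r * ∑' k, wrightTerm α (c + r) x k) :=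
    (summable_abs_wrightTerm (c + r) x hα₀ hα₁).of_abs.hasSum.mul_left (p r)
  have htotal : HasSum (fun q : ℕ × ℕ => p q.1 * wrightTerm α (c + q.1) x q.2) T := by
    have hswap := hsum.prod_symm.hasSum
    rw [(hswap.prod_fiberwise hcol).unique hT] at hswap
    exact (Equiv.prodComm ℕ ℕ).hasSum_iff.1 hswap
  exact htotal.prod_fiberwise hrow

end WrightFunction

section CubicWeights

lemma cubicE_succ (r : ℕ) :
    cubicE (r + 1) = cubicE r * (3 / 2 * (r + 1 / 6) * (r + 5 / 6) / (r + 1)) := by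
  simp only [cubicE, mul_add_one, Nat.factorial_succ, Nat.factorial, pow_succ]
  push_cast
  field_simp
  ring

lemma ascPochhammer_eval_sixth_mul (r : ℕ) :
    (ascPochhammer ℂ r).eval (1 / 6) * (ascPochhammer ℂ r).eval (1 - 1 / 6) =
      r ! * 2 ^ r * ((3⁻¹ ^ r * cubicE r : ℝ) : ℂ) := by
  induction r with
  | zero => simp [cubicE]
  | succ r ih =>
    have hr : (r : ℂ) + 1 ≠ 0 := r.cast_add_one_ne_zero
    rw [ascPochhammer_succ_eval, ascPochhammer_succ_eval, mul_mul_mul_comm, ih, cubicE_succ,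
      Nat.factorial_succ]
    push_cast
    field_simp
    ring

lemma gaussTerm_sixth_eq (c z : ℝ) (r : ℕ) :
    gaussTerm (1 / 6) (1 - 1 / 6) c z r =
      ((3⁻¹ ^ r * cubicE r * (1 / Real.Gamma (c + r)) * (2 * z) ^ r : ℝ) : ℂ) := by
  have hr : (r ! : ℂ) ≠ 0 := Nat.cast_ne_zero.2 r.factorial_ne_zero
  rw [gaussTerm, ascPochhammer_eval_sixth_mul, ← Complex.ofReal_natCast r, ← Complex.ofReal_add,
    Complex.Gamma_ofReal]
  push_cast
  field_simp
  ring

lemma summable_cubicE_div_factorial :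
    Summable fun r : ℕ => |3⁻¹ ^ r * cubicE r| / r ! * (3 / 2) ^ r := by
  have hz : ‖((3 / 4 : ℝ) : ℂ)‖ < 1 := by norm_num
  refine (summable_norm_gaussTerm (a := 1 / 6) (b := 1 - 1 / 6) (c := (1 : ℝ)) hz).congr fun r => ?_
  rw [gaussTerm_sixth_eq, Complex.norm_real, add_comm, Real.Gamma_nat_eq_factorial, norm_mul,
    norm_mul, norm_pow, Real.norm_of_nonneg (r := 2 * (3 / 4)) (by norm_num),
    Real.norm_of_nonneg (r := 1 / (r ! : ℝ)) (by positivity), Real.norm_eq_abs]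
  ring

lemma hasSum_cubicE_div_Gamma (c : ℝ) :
    HasSum (fun r : ℕ => 3⁻¹ ^ r * cubicE r * (1 / Real.Gamma (c + r)))
      (2 ^ (1 - c) * √Real.pi * (Real.Gamma ((c + 1 / 6) / 2))⁻¹ *
        (Real.Gamma ((c + 5 / 6) / 2))⁻¹) := by
  have hz : ‖((1 / 2 : ℝ) : ℂ)‖ < 1 := by norm_num
  rw [← Complex.hasSum_ofReal]
  convert hasSum_gaussTerm (a := 1 / 6) (b := 1 - 1 / 6) (c := c) hz using 1
  · funext r
    rw [gaussTerm_sixth_eq, mul_one_div_cancel two_ne_zero, one_pow, mul_one]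
  · push_cast [Complex.ofReal_cpow zero_le_two, ← Complex.Gamma_ofReal]
    rw [regularizedGaussHGFun_half_eq_baileyValue, baileyValue, add_sub_assoc,
      show (1 - 1 / 6 : ℂ) = 5 / 6 by norm_num]

lemma inv_Gamma_third_sub_mul (m : ℕ) :
    (Real.Gamma (1 / 3 - m))⁻¹ * (Real.Gamma (2 / 3 - m))⁻¹ =
      (3 * m)! / (27 ^ m * m !) * (√3 / (2 * Real.pi)) := by
  induction m with
  | zero =>
    have hrefl := Real.Gamma_mul_Gamma_one_sub (1 / 3)
    rw [mul_one_div, Real.sin_pi_div_three, show (1 - 1 / 3 : ℝ) = 2 / 3 by norm_num] at hrefl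
    rw [← mul_inv, Nat.cast_zero, sub_zero, sub_zero, hrefl]
    simp [div_div_eq_mul_div, mul_comm]
  | succ m ih =>
    have shift (s : ℝ) : (Real.Gamma (s - (m + 1 : ℕ)))⁻¹ =
        (s - (m + 1)) * (Real.Gamma (s - m))⁻¹ := by
      rw [inv_Gamma_eq_self_mul_inv_Gamma_add_one, Nat.cast_succ, sub_add_eq_sub_sub,
        sub_add_cancel]
    rw [shift, shift, mul_mul_mul_comm, ih]
    simp only [mul_add_one, Nat.factorial_succ, pow_succ]
    push_cast
    field_simp
    ring

/-- The coefficient `∑ r, 3⁻ʳ e_r / Γ(1/2 + r - 2k/3)` of `x ^ k / k!` in the double series, in the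
closed form given by Bailey's theorem. -/
noncomputable def cubicCoeff (k : ℕ) : ℝ :=
  2 ^ (1 / 2 + 2 / 3 * k : ℝ) * √Real.pi * (Real.Gamma ((1 - k) / 3))⁻¹ *
    (Real.Gamma ((2 - k) / 3))⁻¹

lemma hasSum_cubicCoeff (k : ℕ) :
    HasSum (fun r : ℕ => 3⁻¹ ^ r * cubicE r * (1 / Real.Gamma (1 / 2 - 2 / 3 * k + r)))
      (cubicCoeff k) := by
  convert hasSum_cubicE_div_Gamma (1 / 2 - 2 / 3 * k) using 1
  rw [cubicCoeff]
  ring_nf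

lemma cubicCoeff_three_mul (m : ℕ) :
    cubicCoeff (3 * m) = √(3 / (2 * Real.pi)) * (4 ^ m * (3 * m)! / (27 ^ m * m !)) := by
  have hpow : (2 : ℝ) ^ (1 / 2 + 2 / 3 * (3 * m : ℕ) : ℝ) = √2 * 4 ^ m := by
    rw [Real.rpow_add two_pos, ← Real.sqrt_eq_rpow,
      show (2 / 3 * (3 * m : ℕ) : ℝ) = 2 * m by push_cast; ring, Real.rpow_mul zero_le_two,
      Real.rpow_natCast, Real.rpow_two, show (2 : ℝ) ^ 2 = 4 by norm_num]
  have hconst : √2 * √Real.pi * (√3 / (2 * Real.pi)) = √(3 / (2 * Real.pi)) := by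
    rw [← Real.sqrt_mul zero_le_two, Real.sqrt_div zero_le_three, mul_div_left_comm,
      Real.sqrt_div_self, ← div_eq_mul_inv]
  have harg₁ : (1 - (3 * m : ℕ) : ℝ) / 3 = 1 / 3 - m := by push_cast; ring
  have harg₂ : (2 - (3 * m : ℕ) : ℝ) / 3 = 2 / 3 - m := by push_cast; ring
  rw [cubicCoeff, hpow, harg₁, harg₂, mul_assoc _ (Real.Gamma _)⁻¹, inv_Gamma_third_sub_mul,
    ← hconst]
  ring

lemma cubicCoeff_eq_zero_of_not_dvd {k : ℕ} (hk : ¬ 3 ∣ k) : cubicCoeff k = 0 := by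
  obtain ⟨m, rfl | rfl⟩ : ∃ m, k = 3 * m + 1 ∨ k = 3 * m + 2 := ⟨k / 3, by omega⟩
  · have hpole : (1 - (3 * m + 1 : ℕ) : ℝ) / 3 = -m := by push_cast; ring
    rw [cubicCoeff, hpole, Real.Gamma_neg_nat_eq_zero, inv_zero, mul_zero, zero_mul]
  · have hpole : (2 - (3 * m + 2 : ℕ) : ℝ) / 3 = -m := by push_cast; ring
    rw [cubicCoeff, hpole, Real.Gamma_neg_nat_eq_zero, inv_zero, mul_zero]

lemma hasSum_pow_div_factorial_mul_cubicCoeff (x : ℝ) :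
    HasSum (fun k : ℕ => x ^ k / k ! * cubicCoeff k)
      (√(3 / (2 * Real.pi)) * Real.exp (4 * x ^ 3 / 27)) := by
  have hinj : Function.Injective (3 * · : ℕ → ℕ) := mul_right_injective₀ three_ne_zero
  rw [← hinj.hasSum_iff]
  · have hexp := (NormedSpace.expSeries_div_hasSum_exp (4 * x ^ 3 / 27)).mul_left
      √(3 / (2 * Real.pi))
    rw [← Real.exp_eq_exp_ℝ] at hexp
    refine hexp.congr_fun fun m => ?_
    rw [Function.comp_apply, cubicCoeff_three_mul, div_pow, mul_pow, pow_mul]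
    field_simp
  · intro k hk
    have hdvd : ¬ 3 ∣ k := fun ⟨m, hm⟩ => hk ⟨m, hm.symm⟩
    rw [cubicCoeff_eq_zero_of_not_dvd hdvd, mul_zero]

end CubicWeights

theorem stmt18 (x : ℝ) :
    (∀ r : ℕ,
      Summable fun k : ℕ => |x ^ k / k.factorial * (1 / Real.Gamma (1 / 2 + r - 2 * k / 3))|) ∧
    (Summable fun r : ℕ => |(3 : ℝ)⁻¹ ^ r * cubicE r * Ffun r x|) ∧
    HasSum (fun r : ℕ => (3 : ℝ)⁻¹ ^ r * cubicE r * Ffun r x)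
      (Real.sqrt (3 / (2 * Real.pi)) * Real.exp (4 * x ^ 3 / 27)) := by
  have hα₀ : (0 : ℝ) ≤ 2 / 3 := by norm_num
  have hα₁ : (2 / 3 : ℝ) < 1 := by norm_num
  have hterm (r k : ℕ) : x ^ k / k ! * (1 / Real.Gamma (1 / 2 + r - 2 * k / 3)) =
      wrightTerm (2 / 3) (1 / 2 + r) x k := by
    rw [wrightTerm, mul_div_right_comm]
  have hsum : HasSum (fun r : ℕ => (3 : ℝ)⁻¹ ^ r * cubicE r * Ffun r x)
      (√(3 / (2 * Real.pi)) * Real.exp (4 * x ^ 3 / 27)) := by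
    simp only [Ffun, hterm]
    exact hasSum_mul_tsum_wrightTerm (1 / 2) x hα₀ hα₁ (by norm_num) summable_cubicE_div_factorial
      hasSum_cubicCoeff (hasSum_pow_div_factorial_mul_cubicCoeff x)
  refine ⟨fun r => ?_, hsum.summable.abs, hsum⟩
  simp only [hterm]
  exact summable_abs_wrightTerm (1 / 2 + r) x hα₀ hα₁
end
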